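/- Let M₁,…,M_h be symmetric m×m matrices over ℚ and M[y] = Σ_{i=1}^h y_i M_i. Suppose the 3×3 minors of M[y] are not all zero, let φ(y) ∈ ℚ[y₁,…,y_h] be a greatest common divisor of all 3×3 minors of M[y], and assume φ is a non-constant polynomial. Assume the rank r of M[y] over ℚ(y₁,…,y_h) satisfies r ≥ 5, and that M₁ = diag(a₁,…,a_r,0,…,0) with a_i ≠ 0 for all i. Then there exists an invertible matrix T ∈ GL_h(ℚ) such that, writing M[Tz] = Σ_{i=1}^h z_i N_i for symmetric rational matrices N₁,…,N_h, the matrix N₁ has rank r and every 3×3 minor of Σ_{i=2}^h z_i N_i is the zero polynomial in z₂,…,z_h (equivalently, Σ_{i=2}^h c_i N_i has rank at most 2 for every (c₂,…,c_h)). -/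

import Mathlib

open Matrix MvPolynomial

theorem aux_indep {k n : ℕ} (B : Matrix (Fin k) (Fin n) ℚ) (hB : 3 ≤ B.rank) :
    ∃ ρ : Fin 3 → Fin k, Function.Injective ρ ∧ LinearIndependent ℚ (fun i => B (ρ i)) := by
  rw [Matrix.rank_eq_finrank_span_row] at hB
  obtain ⟨f, hf, -, hli⟩ := Submodule.exists_fun_fin_finrank_span_eq ℚ (Set.range B.row)
  choose g hg using hf
  have hinj : Function.Injective (fun i => g (Fin.castLE hB i)) := by
    intro a b hab
    have : f (Fin.castLE hB a) = f (Fin.castLE hB b) := by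
      rw [← hg, ← hg]
      exact congrArg B.row hab
    exact Fin.castLE_injective hB (hli.injective this)
  refine ⟨fun i => g (Fin.castLE hB i), hinj, ?_⟩
  have h2 := hli.comp (Fin.castLE hB) (Fin.castLE_injective hB)
  have e : (fun i => B (g (Fin.castLE hB i))) = f ∘ Fin.castLE hB := by
    funext i
    exact hg _
  rw [e]
  exact h2

theorem aux_rank {m : ℕ} (A : Matrix (Fin m) (Fin m) ℚ)
    (hA : ∀ ρ σ : Fin 3 → Fin m, Function.Injective ρ → Function.Injective σ →
      (A.submatrix ρ σ).det = 0) : A.rank ≤ 2 := by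
  by_contra hcon
  obtain ⟨ρ, hρ, hli⟩ := aux_indep A (by omega)
  have h3 : (A.submatrix ρ id).rank = 3 := by
    have := LinearIndependent.rank_matrix (M := A.submatrix ρ id) hli
    simpa using this
  obtain ⟨σ, hσ, hli2⟩ := aux_indep (A.submatrix ρ id)ᵀ (by rw [Matrix.rank_transpose, h3])
  have hu : IsUnit (A.submatrix ρ σ)ᵀ := by
    rw [← Matrix.linearIndependent_rows_iff_isUnit]
    exact hli2
  have hd := (Matrix.isUnit_iff_isUnit_det _).1 hu
  rw [Matrix.det_transpose, hA ρ σ hρ hσ] at hd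
  simp at hd

theorem aux_step {R : Type*} [CommRing R] {n j : ℕ} (p : R)
    (A : Matrix (Fin (n + 1)) (Fin (n + 1)) R)
    (hA : ∀ ρ σ : Fin n → Fin (n + 1), Function.Injective ρ → Function.Injective σ →
      p ^ j ∣ (A.submatrix ρ σ).det) : p ^ (j * (n + 1)) ∣ A.det ^ n := by
  have h1 : ∀ a b, ∃ c, A.adjugate a b = p ^ j * c := by
    intro a b
    rw [Matrix.adjugate_fin_succ_eq_det_submatrix]
    exact Dvd.dvd.mul_left (hA _ _ (Fin.succAbove_right_injective) (Fin.succAbove_right_injective)) _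
  choose B hB using h1
  have h2 : A.adjugate = p ^ j • Matrix.of B := by
    ext a b
    simp [hB]
  have h3 := Matrix.det_adjugate A
  rw [h2, Matrix.det_smul] at h3
  simp only [Fintype.card_fin, Nat.add_sub_cancel] at h3
  rw [← h3, pow_mul]
  exact dvd_mul_right _ _

theorem aux_four {R : Type*} [CommRing R] [IsDomain R] {p d : R} (hp : Prime p)
    (h : p ^ 4 ∣ d ^ 3) : p ^ 2 ∣ d := by
  obtain ⟨e, rfl⟩ := hp.dvd_of_dvd_pow ((dvd_pow_self p (by norm_num)).trans h)
  have h1 : p ∣ e ^ 3 := by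
    have : p ^ 3 * p ∣ p ^ 3 * e ^ 3 := by
      convert h using 1 <;> ring
    exact (mul_dvd_mul_iff_left (pow_ne_zero _ hp.ne_zero)).1 this
  rw [pow_two]
  exact mul_dvd_mul_left _ (hp.dvd_of_dvd_pow h1)

theorem aux_five {R : Type*} [CommRing R] [IsDomain R] {p d : R} (hp : Prime p)
    (h : p ^ 10 ∣ d ^ 4) : p ^ 3 ∣ d := by
  obtain ⟨e, rfl⟩ := hp.dvd_of_dvd_pow ((dvd_pow_self p (by norm_num)).trans h)
  have h1 : p ^ 6 ∣ e ^ 4 := by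
    have : p ^ 4 * p ^ 6 ∣ p ^ 4 * e ^ 4 := by
      convert h using 1 <;> ring
    exact (mul_dvd_mul_iff_left (pow_ne_zero _ hp.ne_zero)).1 this
  obtain ⟨f, rfl⟩ := hp.dvd_of_dvd_pow ((dvd_pow_self p (by norm_num)).trans h1)
  have h2 : p ^ 2 ∣ f ^ 4 := by
    have : p ^ 4 * p ^ 2 ∣ p ^ 4 * f ^ 4 := by
      convert h1 using 1 <;> ring
    exact (mul_dvd_mul_iff_left (pow_ne_zero _ hp.ne_zero)).1 this
  obtain ⟨g, rfl⟩ := hp.dvd_of_dvd_pow ((dvd_pow_self p (by norm_num)).trans h2)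
  exact ⟨g, by ring⟩

theorem aux_det {R : Type*} [CommRing R] [IsDomain R] {p : R} (hp : Prime p)
    (A : Matrix (Fin 5) (Fin 5) R)
    (hA : ∀ ρ σ : Fin 3 → Fin 5, Function.Injective ρ → Function.Injective σ →
      p ∣ (A.submatrix ρ σ).det) : p ^ 3 ∣ A.det := by
  apply aux_five hp
  apply aux_step (n := 4) (j := 2) p A
  intro ρ σ hρ hσ
  apply aux_four hp
  apply aux_step (n := 3) (j := 1) p
  intro ρ' σ' hρ' hσ'
  rw [pow_one, Matrix.submatrix_submatrix]
  exact hA _ _ (hρ.comp hρ') (hσ.comp hσ')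

theorem aux_linear {h : ℕ} (p : MvPolynomial (Fin h) ℚ) (hp : p.totalDegree ≤ 1) :
    ∃ (c : ℚ) (l : Fin h → ℚ), ∀ y, eval y p = c + ∑ i, l i * y i := by
  have h1 := homogeneousComponent_mem 1 p
  rw [homogeneousSubmodule_one_eq_span_X, Submodule.mem_span_range_iff_exists_fun] at h1
  obtain ⟨l, hl⟩ := h1
  refine ⟨coeff 0 p, l, fun y => ?_⟩
  have h2 : p = C (coeff 0 p) + ∑ i, l i • X i := by
    rw [hl, ← homogeneousComponent_zero]
    conv_lhs => rw [← sum_homogeneousComponent p]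
    rcases Nat.le_one_iff_eq_zero_or_eq_one.1 hp with h0 | h0
    · rw [homogeneousComponent_eq_zero 1 p (by omega), h0]; simp
    · rw [h0, Finset.sum_range_succ, Finset.sum_range_one]
  conv_lhs => rw [h2]
  simp [smul_eval]

theorem aux_eval {h m k : ℕ} (M : Fin h → Matrix (Fin m) (Fin m) ℚ) (ρ σ : Fin k → Fin m)
    (y : Fin h → ℚ) :
    eval y ((Matrix.of fun a b => ∑ i, X i * C (M i a b)).submatrix ρ σ).det
      = ((∑ i, y i • M i).submatrix ρ σ).det := by
  rw [RingHom.map_det]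
  congr 1
  ext a b
  simp [Matrix.sum_apply]

theorem aux_deg {h m k : ℕ} (M : Fin h → Matrix (Fin m) (Fin m) ℚ) (ρ σ : Fin k → Fin m) :
    ((Matrix.of fun a b => ∑ i, X i * C (M i a b)).submatrix ρ σ).det.totalDegree ≤ k := by
  apply IsHomogeneous.totalDegree_le
  rw [Matrix.det_apply']
  apply IsHomogeneous.sum
  intro s _
  have h1 : (∏ i, (Matrix.of fun a b => ∑ i, X i * C (M i a b)).submatrix ρ σ (s i) i).IsHomogeneous
      (∑ i : Fin k, 1) := by
    apply IsHomogeneous.prod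
    intro i _
    simp only [Matrix.submatrix_apply, Matrix.of_apply]
    apply IsHomogeneous.sum
    intro j _
    rw [mul_comm]
    exact isHomogeneous_C_mul_X _ _
  have h2 := h1.C_mul ((Equiv.Perm.sign s : ℤ) : ℚ)
  simpa using h2

/-- A linear form on whose kernel every member of the pencil has rank at most two. -/
theorem aux_form (h m r : ℕ) (hh : 0 < h) (hr5 : 5 ≤ r) (hrm : r ≤ m)
    (M : Fin h → Matrix (Fin m) (Fin m) ℚ)
    (φ : MvPolynomial (Fin h) ℚ)
    (hφdvd : ∀ (ρ σ : Fin 3 → Fin m), Function.Injective ρ → Function.Injective σ →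
      φ ∣ ((Matrix.of fun a b => ∑ i, X i * C (M i a b)).submatrix ρ σ).det)
    (hφnc : 0 < φ.totalDegree)
    (dvec : Fin m → ℚ) (hM1 : M ⟨0, hh⟩ = Matrix.diagonal dvec)
    (hdvec : ∀ a : Fin m, a.val < r → dvec a ≠ 0) :
    ∃ l : Fin h → ℚ, l ⟨0, hh⟩ ≠ 0 ∧ ∀ y : Fin h → ℚ, ∑ i, l i * y i = 0 →
      (∑ i, y i • M i).rank ≤ 2 := by
  have hφ0 : φ ≠ 0 := by rintro rfl; simp at hφnc
  have hφu : ¬ IsUnit φ := by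
    intro hu
    obtain ⟨c, -, rfl⟩ := MvPolynomial.isUnit_iff_eq_C_of_isReduced.1 hu
    simp at hφnc
  obtain ⟨p, hpirr, hpφ⟩ := WfDvdMonoid.exists_irreducible_factor hφu hφ0
  have hp : Prime p := hpirr.prime
  have hpd : ∀ (ρ σ : Fin 3 → Fin m), Function.Injective ρ → Function.Injective σ →
      p ∣ ((Matrix.of fun a b => ∑ i, X i * C (M i a b)).submatrix ρ σ).det :=
    fun ρ σ hρ hσ => hpφ.trans (hφdvd ρ σ hρ hσ)
  let e : Fin h → ℚ := Pi.single ⟨0, hh⟩ 1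
  have heM : ∑ i, e i • M i = Matrix.diagonal dvec := by
    rw [Finset.sum_eq_single ⟨0, hh⟩]
    · simp [e, hM1]
    · intro b _ hb
      simp [e, hb]
    · simp
  have hdet : ∀ (k : ℕ) (hk : k ≤ r),
      eval e ((Matrix.of fun a b => ∑ i, X i * C (M i a b)).submatrix
        (Fin.castLE (hk.trans hrm)) (Fin.castLE (hk.trans hrm))).det ≠ 0 := by
    intro k hk
    rw [aux_eval, heM, Matrix.submatrix_diagonal _ _ (Fin.castLE_injective _), Matrix.det_diagonal]
    rw [Finset.prod_ne_zero_iff]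
    intro i _
    exact hdvec _ (by have := i.2; simp; omega)
  have hpdeg : p.totalDegree ≤ 1 := by
    have h3 := aux_det hp ((Matrix.of fun a b => ∑ i, X i * C (M i a b)).submatrix
        (Fin.castLE (hr5.trans hrm)) (Fin.castLE (hr5.trans hrm))) (by
      intro ρ σ hρ hσ
      rw [Matrix.submatrix_submatrix]
      exact hpd _ _ ((Fin.castLE_injective _).comp hρ) ((Fin.castLE_injective _).comp hσ))
    have hdeg := aux_deg M (Fin.castLE (hr5.trans hrm)) (Fin.castLE (hr5.trans hrm))
    have hne := hdet 5 hr5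
    obtain ⟨q, hq⟩ := h3
    rw [hq] at hdeg hne
    have hq0 : q ≠ 0 := by rintro rfl; simp at hne
    rw [totalDegree_mul_of_isDomain (pow_ne_zero _ hp.ne_zero) hq0, pow_succ, pow_two,
      totalDegree_mul_of_isDomain (mul_ne_zero hp.ne_zero hp.ne_zero) hp.ne_zero,
      totalDegree_mul_of_isDomain hp.ne_zero hp.ne_zero] at hdeg
    omega
  obtain ⟨c, l, hl⟩ := aux_linear p hpdeg
  have hvan : ∀ y : Fin h → ℚ, eval y p = 0 → ∀ (ρ σ : Fin 3 → Fin m),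
      Function.Injective ρ → Function.Injective σ →
      ((∑ i, y i • M i).submatrix ρ σ).det = 0 := by
    intro y hy ρ σ hρ hσ
    obtain ⟨q, hq⟩ := hpd ρ σ hρ hσ
    rw [← aux_eval, hq, map_mul, hy, zero_mul]
  have h3r : 3 ≤ r := by omega
  have hc : c = 0 := by
    by_contra hc
    have hzero : (∑ i, C (l i) * X i) * ((Matrix.of fun a b => ∑ i, X i * C (M i a b)).submatrix
        (Fin.castLE (h3r.trans hrm)) (Fin.castLE (h3r.trans hrm))).det = 0 := by
      apply MvPolynomial.funext
      intro y
      rw [map_mul, map_zero, aux_eval]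
      by_cases hy : ∑ i, l i * y i = 0
      · simp [hy]
      · have h1 : eval ((-c / ∑ i, l i * y i) • y) p = 0 := by
          have h2 : ∑ i, l i * ((-c / ∑ i, l i * y i) • y) i
              = (-c / ∑ i, l i * y i) * ∑ i, l i * y i := by
            rw [Finset.mul_sum]
            refine Finset.sum_congr rfl fun i _ => ?_
            simp only [Pi.smul_apply, smul_eq_mul]
            ring
          rw [hl, h2, div_mul_cancel₀ _ hy]
          ring
        have h4 := hvan _ h1 (Fin.castLE (h3r.trans hrm)) (Fin.castLE (h3r.trans hrm))
          (Fin.castLE_injective _) (Fin.castLE_injective _)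
        have h5 : ∑ i, ((-c / ∑ i, l i * y i) • y) i • M i
            = (-c / ∑ i, l i * y i) • ∑ i, y i • M i := by
          rw [Finset.smul_sum]
          refine Finset.sum_congr rfl fun i _ => ?_
          simp only [Pi.smul_apply, smul_eq_mul, mul_smul]
        rw [h5, Matrix.submatrix_smul, Pi.smul_apply, Pi.smul_apply, Matrix.det_smul] at h4
        rcases mul_eq_zero.1 h4 with h6 | h6
        · exact absurd h6 (pow_ne_zero _ (div_ne_zero (neg_ne_zero.2 hc) hy))
        · rw [h6, mul_zero]
    rcases mul_eq_zero.1 hzero with h1 | h1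
    · have hl0 : ∀ y, eval y p = c := by
        intro y
        have := congrArg (eval y) h1
        simp at this
        rw [hl, this, add_zero]
      have hpc : p = C c := MvPolynomial.funext fun y => by rw [hl0, eval_C]
      apply hp.not_unit
      rw [hpc]
      exact (isUnit_iff_ne_zero.2 hc).map C
    · apply hdet 3 h3r
      rw [h1, map_zero]
  subst hc
  refine ⟨l, ?_, ?_⟩
  · intro h0
    apply hdet 3 h3r
    rw [aux_eval]
    apply hvan _ _ _ _ (Fin.castLE_injective _) (Fin.castLE_injective _)
    rw [hl, zero_add]
    simp [e, Pi.single_apply, h0]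
  · intro y hy
    exact aux_rank _ (hvan y (by rw [hl, hy, add_zero]))

/-- If the `3 × 3` minors of the pencil `M[y]` have a non-constant gcd `φ`,
the generic rank is `r ≥ 5`, and `M₁ = diag(a₁,…,a_r,0,…,0)` with all `a_i ≠ 0`, then after a
rational linear change of the `y`-variables the pencil becomes `Σ zᵢ Nᵢ` with `rank N₁ = r`
and `Σ_{i≥2} cᵢ Nᵢ` of rank at most `2` for all scalars `cᵢ`. -/
theorem stmt6 (h m r : ℕ) (hh : 0 < h) (hr5 : 5 ≤ r)
    (M : Fin h → Matrix (Fin m) (Fin m) ℚ) (hsym : ∀ i, (M i).IsSymm)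
    (φ : MvPolynomial (Fin h) ℚ)
    (hminorsnz : ∃ ρ σ : Fin 3 → Fin m, Function.Injective ρ ∧ Function.Injective σ ∧
      ((Matrix.of fun a b => ∑ i, X i * C (M i a b)).submatrix ρ σ).det ≠ 0)
    (hφdvd : ∀ (ρ σ : Fin 3 → Fin m), Function.Injective ρ → Function.Injective σ →
      φ ∣ ((Matrix.of fun a b => ∑ i, X i * C (M i a b)).submatrix ρ σ).det)
    (hφgcd : ∀ ψ : MvPolynomial (Fin h) ℚ,
      (∀ (ρ σ : Fin 3 → Fin m), Function.Injective ρ → Function.Injective σ →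
        ψ ∣ ((Matrix.of fun a b => ∑ i, X i * C (M i a b)).submatrix ρ σ).det) → ψ ∣ φ)
    (hφnc : 0 < φ.totalDegree)
    (hgenrank : Matrix.rank
      (Matrix.of fun a b =>
        algebraMap (MvPolynomial (Fin h) ℚ) (FractionRing (MvPolynomial (Fin h) ℚ))
          (∑ i, X i * C (M i a b)) :
        Matrix (Fin m) (Fin m) (FractionRing (MvPolynomial (Fin h) ℚ))) = r)
    (dvec : Fin m → ℚ) (hM1 : M ⟨0, hh⟩ = Matrix.diagonal dvec)
    (hdvec : ∀ a : Fin m, (a.val < r → dvec a ≠ 0) ∧ (r ≤ a.val → dvec a = 0)) :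
    ∃ T : Matrix (Fin h) (Fin h) ℚ, IsUnit T.det ∧
      Matrix.rank (∑ i, T i ⟨0, hh⟩ • M i) = r ∧
      ∀ c : Fin h → ℚ, c ⟨0, hh⟩ = 0 →
        Matrix.rank (∑ j, ∑ i, (c j * T i j) • M i) ≤ 2 := by
  have hrm : r ≤ m := by
    rw [← hgenrank]
    exact Matrix.rank_le_height _
  obtain ⟨l, hl0, hl⟩ := aux_form h m r hh hr5 hrm M φ hφdvd hφnc dvec hM1
    (fun a => (hdvec a).1)
  let z : Fin h := ⟨0, hh⟩
  let T : Matrix (Fin h) (Fin h) ℚ := Matrix.of fun i j =>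
    if i = j then 1 else if i = z then - l j / l z else 0
  have hTz : ∀ i, T i z = if i = z then 1 else 0 := by
    intro i
    by_cases hi : i = z <;> simp [T, hi]
  refine ⟨T, ?_, ?_, ?_⟩
  · have htri : T.BlockTriangular id := by
      intro i j hij
      have hij' : j < i := hij
      have h1 : i ≠ j := hij'.ne'
      have h2 : i ≠ z := by
        rintro rfl
        simp [z, Fin.lt_def] at hij'
      simp [T, h1, h2]
    rw [Matrix.det_of_upperTriangular htri]
    simp [T]
  · have h1 : ∑ i, T i ⟨0, hh⟩ • M i = Matrix.diagonal dvec := by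
      rw [Finset.sum_eq_single z]
      · have := hTz z
        rw [if_pos rfl] at this
        change T z z • M z = _
        rw [this, one_smul]
        exact hM1
      · intro b _ hb
        change T b z • M b = 0
        rw [hTz, if_neg hb, zero_smul]
      · simp
    rw [h1, Matrix.rank_diagonal]
    have h2 : ∀ a : Fin m, dvec a ≠ 0 ↔ a.val < r := by
      intro a
      refine ⟨fun h0 => ?_, (hdvec a).1⟩
      by_contra hlt
      exact h0 ((hdvec a).2 (not_lt.1 hlt))
    have h3 : Fintype.card {a : Fin m // dvec a ≠ 0} = Fintype.card (Fin r) :=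
      Fintype.card_congr
        { toFun := fun a => ⟨a.1.val, (h2 _).1 a.2⟩
          invFun := fun a => ⟨Fin.castLE hrm a, (h2 _).2 a.2⟩
          left_inv := fun a => rfl
          right_inv := fun a => rfl }
    simpa using h3
  · intro c hc
    have h1 : ∑ j, ∑ i, (c j * T i j) • M i = ∑ i, (∑ j, c j * T i j) • M i := by
      rw [Finset.sum_comm]
      refine Finset.sum_congr rfl fun i _ => ?_
      rw [Finset.sum_smul]
    rw [h1]
    apply hl
    have h2 : ∑ i, l i * ∑ j, c j * T i j = ∑ j, c j * ∑ i, l i * T i j := by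
      simp only [Finset.mul_sum]
      rw [Finset.sum_comm]
      refine Finset.sum_congr rfl fun i _ => Finset.sum_congr rfl fun j _ => ?_
      ring
    rw [h2]
    apply Finset.sum_eq_zero
    intro j _
    by_cases hj : j = z
    · rw [hj, show c z = 0 from hc, zero_mul]
    · have h3 : ∑ i, l i * T i j = l z * T z j + l j * T j j := by
        apply Finset.sum_eq_add z j (Ne.symm hj)
        · intro i _ hi
          simp [T, hi.1, hi.2]
        · simp
        · simp
      have h4 : l z ≠ 0 := hl0
      rw [h3]
      simp only [T, Matrix.of_apply, if_neg (Ne.symm hj), if_true]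
      field_simp
      ring
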